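/- Fix a skew shape λ/μ, a word w of positive integers, a sequence h of positive integers, and a vector α of nonnegative integers. Then there exists at most one SVRPP T of shape λ/μ with read(T) = w, height(T) = h, and ex(T) = α. In other words, an SVRPP is uniquely determined by its shape, reading word, height vector, and excess vector. -/

import Mathlib

open scoped Classical

/-- A partition, given as its weakly decreasing sequence of parts (0-indexed),
with finitely many nonzero parts. -/
def IsPartitionFun (f : ℕ → ℕ) : Prop :=
  (∀ i, f (i + 1) ≤ f i) ∧ ∃ N, ∀ i, N ≤ i → f i = 0

/-- Box `(i, j)` (row `i`, column `j`, both 0-indexed) lies in the skew shape `lam/mu`. -/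
def InShape (lam mu : ℕ → ℕ) (i j : ℕ) : Prop :=
  mu i ≤ j ∧ j < lam i

/-- `A ≤ B` for finite sets of naturals: every element of `A` is at most every
element of `B` (for nonempty sets this says `max A ≤ min B`). -/
def FinsetLE (A B : Finset ℕ) : Prop :=
  ∀ a ∈ A, ∀ b ∈ B, a ≤ b

/-- A set-valued reverse plane partition of skew shape `lam/mu`: every box of the
shape is filled with a nonempty finite set of positive integers, the sets weakly
increase along rows and down columns, and boxes outside the shape are empty. -/
def IsSVRPP (lam mu : ℕ → ℕ) (T : ℕ → ℕ → Finset ℕ) : Prop :=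
  (∀ i j, ¬ InShape lam mu i j → T i j = ∅) ∧
  (∀ i j, InShape lam mu i j → (T i j).Nonempty) ∧
  (∀ i j x, x ∈ T i j → 1 ≤ x) ∧
  (∀ i j, InShape lam mu i j → InShape lam mu i (j + 1) → FinsetLE (T i j) (T i (j + 1))) ∧
  (∀ i j, InShape lam mu i j → InShape lam mu (i + 1) j → FinsetLE (T i j) (T (i + 1) j))

/-- An SVRPP all of whose entries are subsets of `{1, …, n}`. -/
def IsSVRPPn (lam mu : ℕ → ℕ) (n : ℕ) (T : ℕ → ℕ → Finset ℕ) : Prop :=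
  IsSVRPP lam mu T ∧ ∀ i j, T i j ⊆ Finset.Icc 1 n

/-- `ircont T v` = number of columns of `T` containing a set that contains `v`. -/
noncomputable def ircont (T : ℕ → ℕ → Finset ℕ) (v : ℕ) : ℕ :=
  Set.ncard {j : ℕ | ∃ i, v ∈ T i j}

/-- `ceq lam mu T i` = number of boxes `(i,j)` of the shape with `(i+1,j)` also in the
shape and `max T(i,j) = min T(i+1,j)`. -/
noncomputable def ceq (lam mu : ℕ → ℕ) (T : ℕ → ℕ → Finset ℕ) (i : ℕ) : ℕ :=
  Set.ncard {j : ℕ | InShape lam mu i j ∧ InShape lam mu (i + 1) j ∧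
    ∃ m, m ∈ T i j ∧ (∀ x ∈ T i j, x ≤ m) ∧ m ∈ T (i + 1) j ∧ ∀ x ∈ T (i + 1) j, m ≤ x}

/-- `exv lam mu T i` = excess of row `i`: the sum over the boxes of row `i` of
(cardinality of the filling minus one). -/
def exv (lam mu : ℕ → ℕ) (T : ℕ → ℕ → Finset ℕ) (i : ℕ) : ℕ :=
  ∑ j ∈ Finset.Ico (mu i) (lam i), ((T i j).card - 1)

/-! ### Reading words -/

/-- The contribution of row `r` to the reading word of `T` (columns bounded by `C`; empty
boxes are skipped). First the non-pivot entries are read from right to left, within each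
box from largest to smallest; then the pivots (minima of boxes) are read from left to
right, omitting every pivot equal to the maximum entry of the (nonempty) box directly
above it. -/
noncomputable def rowRead (C : ℕ) (T : ℕ → ℕ → Finset ℕ) (r : ℕ) : List ℕ :=
  (((List.range C).reverse).flatMap
      (fun j => ((T r j).sort (· ≤ ·)).tail.reverse)) ++
  ((List.range C).filterMap
      (fun j =>
        if h : (T r j).Nonempty then
          (if r ≠ 0 ∧ (T r j).min' h ∈ T (r - 1) j ∧
              (∀ x ∈ T (r - 1) j, x ≤ (T r j).min' h)
           then none else some ((T r j).min' h))
        else none))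

/-- The reading word of `T`: rows are read from bottom (row `R - 1`) to top (row `0`). -/
noncomputable def readWord (R C : ℕ) (T : ℕ → ℕ → Finset ℕ) : List ℕ :=
  ((List.range R).reverse).flatMap (fun r => rowRead C T r)

/-- The height vector of `T`: the sequence of (0-indexed) row indices of the letters of
the reading word. -/
noncomputable def heightWord (R C : ℕ) (T : ℕ → ℕ → Finset ℕ) : List ℕ :=
  ((List.range R).reverse).flatMap (fun r => (rowRead C T r).map (fun _ => r))

/-- A word is a reverse lattice (Yamanouchi) word if every suffix contains at least as
many `a`'s as `b`'s whenever `a < b` (for positive letters). -/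
def IsReverseLatticeWord (w : List ℕ) : Prop :=
  ∀ k a b, 1 ≤ a → a < b → (w.drop k).count b ≤ (w.drop k).count a


noncomputable def rdF (M p : ℕ → ℕ) (L : List ℕ) : List ℕ :=
  L.filterMap (fun j => if p j = M j then none else some (p j))

theorem rdF_cons_pos {M p : ℕ → ℕ} {l : ℕ} {L : List ℕ} (h : p l = M l) :
    rdF M p (l :: L) = rdF M p L := by
  simp [rdF, h]

theorem rdF_cons_neg {M p : ℕ → ℕ} {l : ℕ} {L : List ℕ} (h : p l ≠ M l) :
    rdF M p (l :: L) = p l :: rdF M p L := by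
  simp [rdF, h]

theorem rdF_false (M p p' : ℕ → ℕ) (L : List ℕ) :
    ∀ (Q : List ℕ), Q ≠ [] →
    L.Pairwise (fun i j => p' i ≤ p' j) → (∀ j ∈ L, M j ≤ p j) →
    (∀ q ∈ Q, ∀ j ∈ L, q ≤ p' j) →
    rdF M p L = Q ++ rdF M p' L → False := by
  induction L with
  | nil => intro Q hQ _ _ _ h; simp [rdF] at h; exact hQ h
  | cons l L ih =>
    intro Q hQ hs hM hle h
    rw [List.pairwise_cons] at hs
    have hM' : ∀ j ∈ L, M j ≤ p j := fun j hj => hM j (List.mem_cons_of_mem _ hj)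
    have hle' : ∀ q ∈ Q, ∀ j ∈ L, q ≤ p' j :=
      fun q hq j hj => hle q hq j (List.mem_cons_of_mem _ hj)
    have hl := hM l List.mem_cons_self
    by_cases h1 : p l = M l <;> by_cases h2 : p' l = M l
    · rw [rdF_cons_pos h1, rdF_cons_pos h2] at h
      exact ih Q hQ hs.2 hM' hle' h
    · rw [rdF_cons_pos h1, rdF_cons_neg h2] at h
      refine ih (Q ++ [p' l]) (by simp) hs.2 hM' ?_ (by simpa using h)
      intro q hq j hj
      rcases List.mem_append.1 hq with hq | hq
      · exact hle' q hq j hj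
      · rw [List.mem_singleton.1 hq]; exact hs.1 j hj
    · rw [rdF_cons_neg h1, rdF_cons_pos h2] at h
      obtain ⟨q, Q', rfl⟩ := List.exists_cons_of_ne_nil hQ
      have hq := hle q List.mem_cons_self l List.mem_cons_self
      have : p l = q := by simpa using (List.cons.inj h).1
      omega
    · rw [rdF_cons_neg h1, rdF_cons_neg h2] at h
      obtain ⟨q, Q', rfl⟩ := List.exists_cons_of_ne_nil hQ
      have h' := (List.cons.inj h).2
      refine ih (Q' ++ [p' l]) (by simp) hs.2 hM' ?_ (by simpa using h')
      intro q hq j hj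
      rcases List.mem_append.1 hq with hq | hq
      · exact hle' q (List.mem_cons_of_mem _ hq) j hj
      · rw [List.mem_singleton.1 hq]; exact hs.1 j hj

theorem rdF_head (M p p' : ℕ → ℕ) (l : ℕ) (L : List ℕ)
    (hs' : (l :: L).Pairwise (fun i j => p' i ≤ p' j))
    (hM : ∀ j ∈ l :: L, M j ≤ p j)
    (h : rdF M p (l :: L) = rdF M p' (l :: L)) : ¬ p l < p' l := by
  intro hlt
  have hl := hM l List.mem_cons_self
  have h2 : p' l ≠ M l := by omega
  rw [rdF_cons_neg h2] at h
  rw [List.pairwise_cons] at hs'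
  by_cases h1 : p l = M l
  · rw [rdF_cons_pos h1] at h
    refine rdF_false M p p' L [p' l] (by simp) hs'.2
      (fun j hj => hM j (List.mem_cons_of_mem _ hj)) ?_ (by simpa using h)
    intro q hq j hj
    rw [List.mem_singleton.1 hq]; exact hs'.1 j hj
  · rw [rdF_cons_neg h1] at h
    have := (List.cons.inj h).1
    omega

theorem rdF_unique (M p p' : ℕ → ℕ) (L : List ℕ)
    (hs : L.Pairwise (fun i j => p i ≤ p j))
    (hs' : L.Pairwise (fun i j => p' i ≤ p' j))
    (hM : ∀ j ∈ L, M j ≤ p j) (hM' : ∀ j ∈ L, M j ≤ p' j)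
    (h : rdF M p L = rdF M p' L) : ∀ j ∈ L, p j = p' j := by
  induction L with
  | nil => simp
  | cons l L ih =>
    have a := rdF_head M p p' l L hs' hM h
    have b := rdF_head M p' p l L hs hM' h.symm
    have e : p l = p' l := by omega
    have ht : rdF M p L = rdF M p' L := by
      by_cases h1 : p l = M l
      · rwa [rdF_cons_pos h1, rdF_cons_pos (e ▸ h1)] at h
      · rw [rdF_cons_neg h1, rdF_cons_neg (e ▸ h1)] at h
        exact (List.cons.inj h).2
    intro j hj
    rcases List.mem_cons.1 hj with rfl | hj
    · exact e
    · exact ih (List.pairwise_cons.1 hs).2 (List.pairwise_cons.1 hs').2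
        (fun j hj => hM j (List.mem_cons_of_mem _ hj))
        (fun j hj => hM' j (List.mem_cons_of_mem _ hj)) ht j hj

theorem filter_tagged (f : ℕ → List ℕ) (s : ℕ) (L : List ℕ) (hL : L.Nodup) :
    ((L.flatMap (fun r => (f r).map (fun x => (x, r)))).filter (fun y => y.2 = s)).map Prod.fst
      = if s ∈ L then f s else [] := by
  induction L with
  | nil => simp
  | cons l L ih =>
    rw [List.nodup_cons] at hL
    rw [List.flatMap_cons, List.filter_append, List.map_append, ih hL.2, List.filter_map]
    by_cases h : l = s
    · subst h
      simp [hL.1, Function.comp_def]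
    · have h' : ¬ s = l := fun e => h e.symm
      simp [h, h', Function.comp_def]

theorem rowRead_eq (R C : ℕ) (T₁ T₂ : ℕ → ℕ → Finset ℕ)
    (hread : readWord R C T₁ = readWord R C T₂)
    (hheight : heightWord R C T₁ = heightWord R C T₂) (r : ℕ) (hr : r < R) :
    rowRead C T₁ r = rowRead C T₂ r := by
  have key : ∀ T : ℕ → ℕ → Finset ℕ,
      ((List.range R).reverse).flatMap (fun r => (rowRead C T r).map (fun x => (x, r)))
        = List.zip (readWord R C T) (heightWord R C T) := by
    intro T
    rw [← List.zip_unzip (((List.range R).reverse).flatMap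
      (fun r => (rowRead C T r).map (fun x => (x, r))))]
    simp [List.unzip_eq_map, readWord, heightWord, List.map_flatMap, Function.comp_def]
  have hn : ((List.range R).reverse).Nodup := List.nodup_reverse.2 List.nodup_range
  have a := filter_tagged (rowRead C T₁) r _ hn
  have b := filter_tagged (rowRead C T₂) r _ hn
  rw [key, hread, hheight, ← key, b] at a
  simpa [hr] using a.symm

theorem svrpp_row_le {lam mu : ℕ → ℕ} {T : ℕ → ℕ → Finset ℕ} (h : IsSVRPP lam mu T)
    (r i j : ℕ) (hij : i < j) (hi : InShape lam mu r i) (hj : InShape lam mu r j) :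
    FinsetLE (T r i) (T r j) := by
  obtain ⟨-, hne, -, hrow, -⟩ := h
  induction j, hij using Nat.le_induction with
  | base => exact hrow r i hi hj
  | succ j hij ih =>
    have hj' : InShape lam mu r j := ⟨by have := hi.1; omega, by have := hj.2; omega⟩
    intro a ha b hb
    obtain ⟨c, hc⟩ := hne r j hj'
    exact (ih hj' a ha c hc).trans (hrow r j hj' hj c hc b hb)

noncomputable def npPart (C : ℕ) (T : ℕ → ℕ → Finset ℕ) (r : ℕ) : List ℕ :=
  ((List.range C).reverse).flatMap (fun j => ((T r j).sort (· ≤ ·)).tail.reverse)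

noncomputable def pvPart (C : ℕ) (T : ℕ → ℕ → Finset ℕ) (r : ℕ) : List ℕ :=
  (List.range C).filterMap
      (fun j =>
        if h : (T r j).Nonempty then
          (if r ≠ 0 ∧ (T r j).min' h ∈ T (r - 1) j ∧
              (∀ x ∈ T (r - 1) j, x ≤ (T r j).min' h)
           then none else some ((T r j).min' h))
        else none)

noncomputable def piv (T : ℕ → ℕ → Finset ℕ) (r j : ℕ) : ℕ :=
  if h : (T r j).Nonempty then (T r j).min' h else 0

noncomputable def mab (T : ℕ → ℕ → Finset ℕ) (r j : ℕ) : ℕ :=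
  if r = 0 then 0 else (T (r - 1) j).sup id

theorem npPart_length {lam mu : ℕ → ℕ} {T : ℕ → ℕ → Finset ℕ} (h : IsSVRPP lam mu T)
    (C : ℕ) (hC : ∀ r, lam r ≤ C) (r : ℕ) :
    (npPart C T r).length = exv lam mu T r := by
  have e : (npPart C T r).length = ∑ j ∈ Finset.range C, ((T r j).card - 1) := by
    simp only [npPart, List.length_flatMap, List.length_reverse, List.length_tail,
      Finset.length_sort, List.map_reverse, List.sum_reverse]
    rw [← List.sum_toFinset _ List.nodup_range, List.toFinset_range]
  rw [e, exv]
  symm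
  apply Finset.sum_subset
  · intro j hj
    have := hC r
    simp at hj ⊢
    omega
  · intro j _ hj
    have : T r j = ∅ := h.1 r j (by intro hh; exact hj (Finset.mem_Ico.2 hh))
    simp [this]

theorem mem_sort_tail (s : Finset ℕ) (h : s.Nonempty) (x : ℕ) :
    x ∈ (s.sort (· ≤ ·)).tail ↔ x ∈ s ∧ s.min' h < x := by
  have hs : (s.sort (· ≤ ·)).Pairwise (· < ·) := Finset.sortedLT_sort s |>.pairwise
  have hm : ∀ y, y ∈ s ↔ y ∈ s.sort (· ≤ ·) := fun y => (Finset.mem_sort _).symm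
  cases hh : s.sort (· ≤ ·) with
  | nil =>
    obtain ⟨y, hy⟩ := h
    rw [hm, hh] at hy
    simp at hy
  | cons a l =>
    rw [hh] at hs hm
    rw [List.pairwise_cons] at hs
    have ha : s.min' h = a := by
      apply le_antisymm
      · exact Finset.min'_le _ _ ((hm a).2 List.mem_cons_self)
      · apply Finset.le_min'
        intro y hy
        rcases List.mem_cons.1 ((hm y).1 hy) with rfl | hy
        · exact le_rfl
        · exact (hs.1 y hy).le
    rw [ha, hm]
    simp only [List.tail_cons, List.mem_cons]
    constructor
    · intro hx; exact ⟨Or.inr hx, hs.1 x hx⟩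
    · rintro ⟨rfl | hx, hlt⟩
      · exact absurd hlt (lt_irrefl _)
      · exact hx

theorem mem_npPart {lam mu : ℕ → ℕ} {T : ℕ → ℕ → Finset ℕ} (h : IsSVRPP lam mu T)
    (C : ℕ) (hC : ∀ r, lam r ≤ C) (r x : ℕ) :
    x ∈ npPart C T r ↔ ∃ j, InShape lam mu r j ∧ x ∈ T r j ∧ piv T r j < x := by
  simp only [npPart, List.mem_flatMap, List.mem_reverse, List.mem_range]
  constructor
  · rintro ⟨j, hj, hx⟩
    by_cases hs : InShape lam mu r j
    · refine ⟨j, hs, ?_⟩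
      have hne := h.2.1 r j hs
      rw [mem_sort_tail _ hne] at hx
      simpa [piv, hne] using hx
    · rw [h.1 r j hs] at hx
      simp at hx
  · rintro ⟨j, hs, hx⟩
    have hne := h.2.1 r j hs
    refine ⟨j, lt_of_lt_of_le hs.2 (hC r), ?_⟩
    rw [mem_sort_tail _ hne]
    simpa [piv, hne] using hx

theorem pvPart_eq {lam mu : ℕ → ℕ} {T : ℕ → ℕ → Finset ℕ} (h : IsSVRPP lam mu T)
    (C : ℕ) (r : ℕ) :
    pvPart C T r = rdF (mab T r) (piv T r)
      ((List.range C).filter (fun j => InShape lam mu r j)) := by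
  rw [rdF, List.filterMap_filter, pvPart]
  apply List.filterMap_congr
  intro j _
  by_cases hs : InShape lam mu r j
  · have hne := h.2.1 r j hs
    have h1 : 1 ≤ (T r j).min' hne := h.2.2.1 r j _ (Finset.min'_mem _ _)
    have : (r ≠ 0 ∧ (T r j).min' hne ∈ T (r - 1) j ∧
              (∀ x ∈ T (r - 1) j, x ≤ (T r j).min' hne)) ↔ piv T r j = mab T r j := by
      simp only [piv, hne, mab, dif_pos]
      by_cases hr : r = 0
      · simp [hr]
        subst hr
        omega
      · simp only [hr, if_false, ne_eq, not_false_eq_true, true_and]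
        constructor
        · rintro ⟨ha, hb⟩
          apply le_antisymm
          · exact Finset.le_sup (f := id) ha
          · exact Finset.sup_le hb
        · intro e
          have hne' : (T (r-1) j).Nonempty := by
            by_contra hc
            rw [Finset.not_nonempty_iff_eq_empty.1 hc] at e
            simp at e
            omega
          constructor
          · obtain ⟨y, hy, hy'⟩ := Finset.exists_mem_eq_sup _ hne' (id : ℕ → ℕ)
            rw [e, hy']
            exact hy
          · intro x hx
            rw [e]
            exact Finset.le_sup (f := id) hx
    simp only [hs, decide_true, if_true, hne, dif_pos]
    have hpv : piv T r j = (T r j).min' hne := by simp [piv, hne]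
    by_cases hc : piv T r j = mab T r j
    · rw [if_pos (this.2 hc), if_pos hc]
    · rw [if_neg (fun h => hc (this.1 h)), if_neg hc, hpv]
  · have := h.1 r j hs
    simp [hs, this]

theorem piv_mem {lam mu : ℕ → ℕ} {T : ℕ → ℕ → Finset ℕ} (h : IsSVRPP lam mu T) {r j : ℕ}
    (hs : InShape lam mu r j) : piv T r j ∈ T r j := by
  have hne := h.2.1 r j hs
  simp only [piv, hne, dif_pos]
  exact Finset.min'_mem _ _

theorem piv_le {T : ℕ → ℕ → Finset ℕ} {r j x : ℕ} (hx : x ∈ T r j) : piv T r j ≤ x := by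
  have hne : (T r j).Nonempty := ⟨x, hx⟩
  simp only [piv, hne, dif_pos]
  exact Finset.min'_le _ _ hx

theorem piv_pairwise {lam mu : ℕ → ℕ} {T : ℕ → ℕ → Finset ℕ} (h : IsSVRPP lam mu T)
    (C r : ℕ) : ((List.range C).filter (fun j => InShape lam mu r j)).Pairwise
      (fun i j => piv T r i ≤ piv T r j) := by
  have : ((List.range C).filter (fun j => InShape lam mu r j)).Pairwise (· < ·) :=
    List.Pairwise.filter _ List.pairwise_lt_range
  refine List.Pairwise.imp_of_mem ?_ this
  intro i j hi hj hij
  have hi' : InShape lam mu r i := by simpa using (List.mem_filter.1 hi).2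
  have hj' : InShape lam mu r j := by simpa using (List.mem_filter.1 hj).2
  exact svrpp_row_le h r i j hij hi' hj' _ (piv_mem h hi') _ (piv_mem h hj')

theorem mab_le {lam mu : ℕ → ℕ} {T : ℕ → ℕ → Finset ℕ} (h : IsSVRPP lam mu T) {r j : ℕ}
    (hs : InShape lam mu r j) : mab T r j ≤ piv T r j := by
  unfold mab
  cases r with
  | zero => simp
  | succ r =>
    simp only [Nat.add_sub_cancel, Nat.succ_ne_zero, if_false]
    apply Finset.sup_le
    intro x hx
    have hs' : InShape lam mu r j := by
      by_contra hc
      rw [h.1 r j hc] at hx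
      simp at hx
    exact h.2.2.2.2 r j hs' hs x hx _ (piv_mem h hs)

theorem row_subset {lam mu : ℕ → ℕ} {T₁ T₂ : ℕ → ℕ → Finset ℕ} (h₁ : IsSVRPP lam mu T₁)
    (h₂ : IsSVRPP lam mu T₂) (C : ℕ) (hC : ∀ r, lam r ≤ C) (r : ℕ)
    (hnp : npPart C T₁ r = npPart C T₂ r)
    (hp : ∀ j, InShape lam mu r j → piv T₁ r j = piv T₂ r j) (j : ℕ)
    (hs : InShape lam mu r j) : T₁ r j ⊆ T₂ r j := by
  intro x hx
  rcases (piv_le hx).eq_or_lt with e | hlt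
  · rw [← e, hp j hs]
    exact piv_mem h₂ hs
  · have : x ∈ npPart C T₁ r := (mem_npPart h₁ C hC r x).2 ⟨j, hs, hx, hlt⟩
    rw [hnp, mem_npPart h₂ C hC] at this
    obtain ⟨k, hk, hxk, hlt'⟩ := this
    rcases lt_trichotomy j k with hjk | rfl | hjk
    · have := svrpp_row_le h₁ r j k hjk hs hk x hx _ (piv_mem h₁ hk)
      have := hp k hk
      omega
    · exact hxk
    · have := svrpp_row_le h₂ r k j hjk hk hs x hxk _ (piv_mem h₂ hs)
      have := hp j hs
      omega

/-- An SVRPP of shape `lam/mu` is uniquely determined by its reading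
word, its height vector and its excess vector: there is at most one SVRPP with given
values of these three statistics. (`R` bounds the rows and `C` the columns of the
shape.) -/
theorem svrpp_unique_reconstruction (lam mu : ℕ → ℕ)
    (hlam : IsPartitionFun lam) (hmu : IsPartitionFun mu) (hsub : ∀ r, mu r ≤ lam r)
    (R C : ℕ) (hR : ∀ r, R ≤ r → lam r = 0) (hC : ∀ r, lam r ≤ C)
    (T₁ T₂ : ℕ → ℕ → Finset ℕ)
    (h₁ : IsSVRPP lam mu T₁) (h₂ : IsSVRPP lam mu T₂)
    (hread : readWord R C T₁ = readWord R C T₂)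
    (hheight : heightWord R C T₁ = heightWord R C T₂)
    (hex : ∀ r, exv lam mu T₁ r = exv lam mu T₂ r) :
    T₁ = T₂ := by
  have hsplit : ∀ r < R, npPart C T₁ r = npPart C T₂ r ∧ pvPart C T₁ r = pvPart C T₂ r := by
    intro r hr
    have e : npPart C T₁ r ++ pvPart C T₁ r = npPart C T₂ r ++ pvPart C T₂ r :=
      rowRead_eq R C T₁ T₂ hread hheight r hr
    exact List.append_inj e
      (by rw [npPart_length h₁ C hC, npPart_length h₂ C hC, hex])
  have main : ∀ r j, T₁ r j = T₂ r j := by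
    intro r
    induction r using Nat.strong_induction_on with
    | _ r ih =>
      have hab : mab T₁ r = mab T₂ r := by
        funext j
        unfold mab
        split_ifs with hr
        · rfl
        · rw [ih (r - 1) (by omega) j]
      intro j
      by_cases hs : InShape lam mu r j
      swap
      · rw [h₁.1 r j hs, h₂.1 r j hs]
      have hr : r < R := by
        by_contra hc
        have := hR r (by omega)
        have := hs.2
        omega
      obtain ⟨hn, hv⟩ := hsplit r hr
      rw [pvPart_eq h₁, pvPart_eq h₂, ← hab] at hv
      have hp : ∀ j, InShape lam mu r j → piv T₁ r j = piv T₂ r j := by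
        intro j hj
        refine rdF_unique _ _ _ _ (piv_pairwise h₁ C r) (piv_pairwise h₂ C r) ?_ ?_ hv j ?_
        · intro i hi
          exact mab_le h₁ (by simpa using (List.mem_filter.1 hi).2)
        · intro i hi
          rw [hab]
          exact mab_le h₂ (by simpa using (List.mem_filter.1 hi).2)
        · simp only [List.mem_filter, List.mem_range, decide_eq_true_eq]
          exact ⟨lt_of_lt_of_le hj.2 (hC r), hj⟩
      exact Finset.Subset.antisymm (row_subset h₁ h₂ C hC r hn hp j hs)
        (row_subset h₂ h₁ C hC r hn.symm (fun j hj => (hp j hj).symm) j hs)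
  funext r j
  exact main r j
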